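/- Let n ≥ 5. Then for every smooth compactly supported complex-valued function u on ℝ^n whose support does not contain the origin, one has (n²(n-4)²/16) · ∫_{ℝ^n} |u|² / |x|⁴ dx ≤ ∫_{ℝ^n} |Δu|² dx. -/

import Mathlib

/-!
The inequality is the integral of a pointwise one. Put `r = ‖x‖`, `C = n (n - 4) / 4`,
`a = (n - 4) / 2`, `b = (n - 2) / 2`, and consider the vector field
`F = Re (ū ∇u) / r ^ 2 + b |u| ^ 2 x / r ^ 4`. Away from the origin,
`|Δu| ^ 2 - C ^ 2 |u| ^ 2 / r ^ 4 + 2 C div F`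
`  = |Δu + C u / r ^ 2| ^ 2 + (2 C / r ^ 2) |∇u + a u x / r ^ 2| ^ 2 ≥ 0`.
The first square is the Cauchy-Schwarz step and the second one the weighted Hardy inequality for
`∫ |∇u| ^ 2 / r ^ 2`. As `u` vanishes near the origin, `F` is smooth with compact support, so its
divergence integrates to zero. The pointwise inequality is `rellich_pointwise`, resting on the
formula `fderiv_rellichField` for `∂ᵢ Fᵢ`.
-/

open MeasureTheory Real

/-- The Euclidean Laplacian of a function on `ℝ^n`. -/
noncomputable def lap {n : ℕ} {E : Type*} [NormedAddCommGroup E] [NormedSpace ℝ E]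
    (f : EuclideanSpace ℝ (Fin n) → E) (x : EuclideanSpace ℝ (Fin n)) : E :=
  ∑ i : Fin n,
    fderiv ℝ (fun y => fderiv ℝ f y (EuclideanSpace.single i 1)) x (EuclideanSpace.single i 1)

/-- The Euclidean norm of the gradient of a function on `ℝ^n`. -/
noncomputable def gradNorm {n : ℕ} {E : Type*} [NormedAddCommGroup E] [NormedSpace ℝ E]
    (f : EuclideanSpace ℝ (Fin n) → E) (x : EuclideanSpace ℝ (Fin n)) : ℝ :=
  Real.sqrt (∑ i : Fin n, ‖fderiv ℝ f x (EuclideanSpace.single i 1)‖ ^ 2)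

/-- The `i`-th component of the vector field `Re (ū ∇u) / |x| ^ 2 + b |u| ^ 2 x / |x| ^ 4`; the
real inner product on `ℂ` is `⟪z, w⟫ = Re (z̄ w)`. -/
noncomputable def rellichField {n : ℕ} (b : ℝ) (u : EuclideanSpace ℝ (Fin n) → ℂ) (i : Fin n)
    (x : EuclideanSpace ℝ (Fin n)) : ℝ :=
  inner ℝ (u x) (fderiv ℝ u x (EuclideanSpace.single i 1)) * (‖x‖ ^ 2)⁻¹ +
    b * (x i * ‖u x‖ ^ 2 * ((‖x‖ ^ 2)⁻¹) ^ 2)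

lemma contDiff_partial {n : ℕ} {u : EuclideanSpace ℝ (Fin n) → ℂ}
    (hu : ContDiff ℝ (⊤ : ℕ∞) u) (v : EuclideanSpace ℝ (Fin n)) :
    ContDiff ℝ (⊤ : ℕ∞) (fun y => fderiv ℝ u y v) :=
  (hu.fderiv_right (m := (⊤ : ℕ∞)) (by simp)).clm_apply contDiff_const

/-- A function which vanishes wherever `u` does and is `C¹` away from the origin is `C¹`, because
`u` vanishes near the origin. -/
lemma contDiff_of_support {n : ℕ} {u : EuclideanSpace ℝ (Fin n) → ℂ}
    (hsupp : (0 : EuclideanSpace ℝ (Fin n)) ∉ tsupport u)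
    {f : EuclideanSpace ℝ (Fin n) → ℝ} (h0 : ∀ x, u x = 0 → f x = 0)
    (hf : ∀ x, x ≠ 0 → ContDiffAt ℝ 1 f x) : ContDiff ℝ 1 f := by
  refine contDiff_iff_contDiffAt.mpr fun x => ?_
  by_cases hx : x = 0
  · have hsub : Function.support f ⊆ Function.support u := fun y hy h => hy (h0 y h)
    have hxf : x ∉ tsupport f := fun h => hsupp (hx ▸ closure_mono hsub h)
    exact contDiffAt_const.congr_of_eventuallyEq (notMem_tsupport_iff_eventuallyEq.mp hxf)
  · exact hf x hx

lemma hasCompactSupport_of_support {n : ℕ} {u : EuclideanSpace ℝ (Fin n) → ℂ}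
    (hcs : HasCompactSupport u)
    {f : EuclideanSpace ℝ (Fin n) → ℝ} (h0 : ∀ x, u x = 0 → f x = 0) : HasCompactSupport f :=
  hcs.mono (fun y hy => fun h => hy (h0 y h))

lemma contDiffAt_inv_norm_sq {n : ℕ} {x : EuclideanSpace ℝ (Fin n)} (hx : x ≠ 0) :
    ContDiffAt ℝ 1 (fun y : EuclideanSpace ℝ (Fin n) => (‖y‖ ^ 2)⁻¹) x :=
  ((contDiff_norm_sq ℝ).contDiffAt).inv (by simpa using hx)

lemma rellichField_eq_zero {n : ℕ} (b : ℝ) (u : EuclideanSpace ℝ (Fin n) → ℂ) (i : Fin n)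
    (x : EuclideanSpace ℝ (Fin n)) (h : u x = 0) : rellichField b u i x = 0 := by
  simp [rellichField, h]

lemma contDiff_rellichField {n : ℕ} (b : ℝ) {u : EuclideanSpace ℝ (Fin n) → ℂ}
    (hu : ContDiff ℝ (⊤ : ℕ∞) u) (hsupp : (0 : EuclideanSpace ℝ (Fin n)) ∉ tsupport u)
    (i : Fin n) : ContDiff ℝ 1 (rellichField b u i) := by
  refine contDiff_of_support hsupp (rellichField_eq_zero b u i) fun x hx => ?_
  have h1 : ContDiffAt ℝ 1 u x := (hu.of_le (by simp)).contDiffAt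
  have h2 : ContDiffAt ℝ 1 (fun y => fderiv ℝ u y (EuclideanSpace.single i 1)) x :=
    ((contDiff_partial hu _).of_le (by simp)).contDiffAt
  have h3 := contDiffAt_inv_norm_sq hx
  have h4 : ContDiffAt ℝ 1 (fun y : EuclideanSpace ℝ (Fin n) => y i) x := by fun_prop
  exact ((h1.inner ℝ h2).mul h3).add
    (contDiffAt_const.mul ((h4.mul (h1.norm_sq ℝ)).mul (h3.pow 2)))

lemma integral_fderiv_eq_zero {n : ℕ} {f : EuclideanSpace ℝ (Fin n) → ℝ}
    (hf : ContDiff ℝ 1 f) (hc : HasCompactSupport f) (v : EuclideanSpace ℝ (Fin n)) :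
    Integrable (fun x => fderiv ℝ f x v) ∧ ∫ x, fderiv ℝ f x v = 0 := by
  have hi : Integrable (fun x => fderiv ℝ f x v) := by
    refine Continuous.integrable_of_hasCompactSupport ?_ (hc.fderiv_apply ℝ v)
    exact (hf.continuous_fderiv (by simp)).clm_apply continuous_const
  refine ⟨hi, ?_⟩
  have := integral_mul_fderiv_eq_neg_fderiv_mul_of_integrable
    (μ := (volume : Measure (EuclideanSpace ℝ (Fin n)))) (𝕜 := ℝ) (f := fun _ => (1 : ℝ))
    (g := f) (v := v) (by simp) (by simpa using hi)
    (by simpa using hf.continuous.integrable_of_hasCompactSupport hc)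
    (by intros; fun_prop) (fun x _ => hf.differentiable (by simp) x)
  simpa using this

lemma fderiv_rellichField {n : ℕ} (b : ℝ) {u : EuclideanSpace ℝ (Fin n) → ℂ}
    (hu : ContDiff ℝ (⊤ : ℕ∞) u) (hsupp : (0 : EuclideanSpace ℝ (Fin n)) ∉ tsupport u)
    (i : Fin n) {x : EuclideanSpace ℝ (Fin n)} (hx : x ≠ 0) :
    fderiv ℝ (rellichField b u i) x (EuclideanSpace.single i 1) =
      (‖fderiv ℝ u x (EuclideanSpace.single i 1)‖ ^ 2 +
        inner ℝ (u x) (fderiv ℝ (fun y => fderiv ℝ u y (EuclideanSpace.single i 1)) x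
          (EuclideanSpace.single i 1))) * (‖x‖ ^ 2)⁻¹
      + (2 * b - 2) * (x i * inner ℝ (u x) (fderiv ℝ u x (EuclideanSpace.single i 1)))
        * ((‖x‖ ^ 2)⁻¹) ^ 2
      + b * ‖u x‖ ^ 2 * (((‖x‖ ^ 2)⁻¹) ^ 2 - 4 * x i ^ 2 * ((‖x‖ ^ 2)⁻¹) ^ 3) := by
  set e : EuclideanSpace ℝ (Fin n) := EuclideanSpace.single i 1 with he
  have hx2 : ‖x‖ ^ 2 ≠ 0 := by simpa using hx
  have hd : ∀ {G : Type} [NormedAddCommGroup G] [NormedSpace ℝ G]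
      {f : EuclideanSpace ℝ (Fin n) → G}, DifferentiableAt ℝ f x →
      HasDerivAt (fun t : ℝ => f (x + t • e)) (fderiv ℝ f x e) 0 := fun h =>
    h.hasFDerivAt.hasLineDerivAt e
  have h1 := hd (f := u) (hu.differentiable (by simp) x)
  have h2 := hd (f := fun y => fderiv ℝ u y e)
    ((contDiff_partial hu e).differentiable (by simp) x)
  have hid : HasDerivAt (fun t : ℝ => x + t • e) e 0 := by
    simpa using ((hasDerivAt_id (0 : ℝ)).smul_const e).const_add x
  have h3 := hid.norm_sq
  have h4 : HasDerivAt (fun t : ℝ => (x + t • e) i) 1 0 := by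
    simpa [he] using (hasDerivAt_id (0 : ℝ)).const_add (x i)
  have h5 := h3.inv (by simpa using hx)
  have h6 := ((h1.inner ℝ h2).mul h5).add
    (((h4.mul h1.norm_sq).mul (h5.pow 2)).const_mul b)
  have h7 := hd (f := rellichField b u i)
    ((contDiff_rellichField b hu hsupp i).differentiable (by simp) x)
  rw [h7.unique h6]
  have hxe : inner ℝ x e = x i := by simp [he, EuclideanSpace.inner_single_right]
  simp only [zero_smul, add_zero, hxe, real_inner_self_eq_norm_sq, Pi.inv_apply, Pi.mul_apply,
    Pi.pow_apply, Nat.add_one_sub_one, pow_one, Nat.cast_ofNat]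
  field_simp
  ring

lemma rellich_pointwise {n : ℕ} (hn : 5 ≤ n) {u : EuclideanSpace ℝ (Fin n) → ℂ}
    (hu : ContDiff ℝ (⊤ : ℕ∞) u) (hsupp : (0 : EuclideanSpace ℝ (Fin n)) ∉ tsupport u)
    {x : EuclideanSpace ℝ (Fin n)} (hx : x ≠ 0) :
    ((n : ℝ) ^ 2 * ((n : ℝ) - 4) ^ 2 / 16) * (‖u x‖ ^ 2 / ‖x‖ ^ 4)
      - 2 * ((n : ℝ) * (n - 4) / 4) * ∑ i, fderiv ℝ (rellichField (((n : ℝ) - 2) / 2) u i) x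
        (EuclideanSpace.single i 1) ≤ ‖lap u x‖ ^ 2 := by
  have hn' : (5 : ℝ) ≤ n := by exact_mod_cast hn
  simp only [fderiv_rellichField _ hu hsupp _ hx]
  rw [Finset.sum_add_distrib, Finset.sum_add_distrib, ← Finset.sum_mul, ← Finset.sum_mul,
    ← Finset.mul_sum, ← Finset.mul_sum, Finset.sum_sub_distrib, ← Finset.sum_mul, ← Finset.mul_sum,
    Finset.sum_add_distrib, ← inner_sum]
  have hL : ∑ i : Fin n, fderiv ℝ (fun y => fderiv ℝ u y (EuclideanSpace.single i 1)) x
          (EuclideanSpace.single i 1) = lap u x := rfl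
  rw [hL]
  have hsq : ∑ i : Fin n, x i ^ 2 = ‖x‖ ^ 2 := (EuclideanSpace.real_norm_sq_eq x).symm
  rw [hsq]
  have hx2 : 0 < ‖x‖ ^ 2 := by positivity
  have hU : ‖u x‖ ^ 2 / ‖x‖ ^ 4 = ‖u x‖ ^ 2 * ((‖x‖ ^ 2)⁻¹) ^ 2 := by
    rw [div_eq_mul_inv, inv_pow, ← pow_mul]
  rw [hU]
  have hs1 : ‖x‖ ^ 2 * (‖x‖ ^ 2)⁻¹ = 1 := mul_inv_cancel₀ hx2.ne'
  have hs0 : 0 < (‖x‖ ^ 2)⁻¹ := inv_pos.mpr hx2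
  set s := (‖x‖ ^ 2)⁻¹ with hs
  set a : ℝ := ((n : ℝ) - 4) / 2 with ha
  set C : ℝ := (n : ℝ) * (n - 4) / 4 with hC
  have hC0 : 0 ≤ C := by rw [hC]; nlinarith
  have hA : 0 ≤ ‖lap u x + (C * s) • u x‖ ^ 2 := by positivity
  rw [norm_add_sq_real, inner_smul_right, norm_smul, mul_pow, Real.norm_eq_abs, sq_abs,
    real_inner_comm] at hA
  have hB : 0 ≤ ∑ i : Fin n,
      ‖fderiv ℝ u x (EuclideanSpace.single i 1) + (a * s * x i) • u x‖ ^ 2 := by positivity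
  have hB' : ∑ i : Fin n,
      ‖fderiv ℝ u x (EuclideanSpace.single i 1) + (a * s * x i) • u x‖ ^ 2 =
      ∑ i : Fin n, ‖fderiv ℝ u x (EuclideanSpace.single i 1)‖ ^ 2 +
      2 * a * s * ∑ i : Fin n, x i * inner ℝ (u x) (fderiv ℝ u x (EuclideanSpace.single i 1))
      + a ^ 2 * s * ‖u x‖ ^ 2 * (‖x‖ ^ 2 * s) := by
    rw [← hsq, Finset.sum_mul, Finset.mul_sum, Finset.mul_sum, ← Finset.sum_add_distrib,
      ← Finset.sum_add_distrib]
    refine Finset.sum_congr rfl fun i _ => ?_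
    rw [norm_add_sq_real, inner_smul_right, norm_smul, mul_pow, Real.norm_eq_abs, sq_abs,
      real_inner_comm]
    ring
  rw [hB', hs1] at hB
  have hB2 := mul_nonneg (mul_nonneg (mul_nonneg zero_le_two hC0) hs0.le) hB
  have hs3 : (∑ i : Fin n, s ^ 2) - 4 * ‖x‖ ^ 2 * s ^ 3 = ((n : ℝ) - 4) * s ^ 2 := by
    simp only [Finset.sum_const, Finset.card_univ, Fintype.card_fin, nsmul_eq_mul]
    linear_combination (-4 * s ^ 2) * hs1
  rw [hs3]
  generalize ∑ i : Fin n, x i * inner ℝ (u x) (fderiv ℝ u x (EuclideanSpace.single i 1)) = P at *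
  generalize ∑ i : Fin n, ‖fderiv ℝ u x (EuclideanSpace.single i 1)‖ ^ 2 = D at *
  generalize (inner ℝ (u x) (lap u x) : ℝ) = I at *
  rw [← sub_nonneg]
  refine (add_nonneg hA hB2).trans_eq ?_
  rw [hC, ha]
  ring

theorem classical_rellich (n : ℕ) (hn : 5 ≤ n)
    (u : EuclideanSpace ℝ (Fin n) → ℂ) (hu : ContDiff ℝ (⊤ : ℕ∞) u) (hcs : HasCompactSupport u)
    (hsupp : (0 : EuclideanSpace ℝ (Fin n)) ∉ tsupport u) :
    ((n : ℝ) ^ 2 * ((n : ℝ) - 4) ^ 2 / 16) * ∫ x, ‖u x‖ ^ 2 / ‖x‖ ^ 4 ≤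
      ∫ x, ‖lap u x‖ ^ 2 := by
  have hF : ∀ i : Fin n, _ := fun i =>
    integral_fderiv_eq_zero (contDiff_rellichField (((n : ℝ) - 2) / 2) hu hsupp i)
      (hasCompactSupport_of_support hcs (rellichField_eq_zero _ u i))
      (EuclideanSpace.single i 1)
  have hsum : Integrable (fun x => ∑ i, fderiv ℝ (rellichField (((n : ℝ) - 2) / 2) u i) x
        (EuclideanSpace.single i 1)) := integrable_finsetSum _ fun i _ => (hF i).1
  have hU : Integrable (fun x => ‖u x‖ ^ 2 / ‖x‖ ^ 4) := by
    have h0 : ∀ x, u x = 0 → ‖u x‖ ^ 2 / ‖x‖ ^ 4 = 0 := fun x h => by simp [h]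
    refine Continuous.integrable_of_hasCompactSupport (ContDiff.continuous (𝕜 := ℝ) (n := 1) ?_)
      (hasCompactSupport_of_support hcs h0)
    refine contDiff_of_support hsupp h0 fun x hx => ?_
    have := (((hu.of_le (by simp)).contDiffAt (x := x)).norm_sq ℝ).mul
      ((contDiffAt_inv_norm_sq hx).pow 2)
    refine this.congr_of_eventuallyEq (.of_forall fun y => ?_)
    simp only [div_eq_mul_inv, inv_pow, ← pow_mul]
  have hlap : Integrable (fun x => ‖lap u x‖ ^ 2) := by
    have hc : Continuous (lap u) := by
      refine continuous_finsetSum _ fun i _ => ?_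
      exact (contDiff_partial (contDiff_partial hu _) _).continuous
    refine (hc.norm.pow 2).integrable_of_hasCompactSupport ?_
    have h0 : HasCompactSupport (lap u) := by
      refine hcs.mono' fun x hx => ?_
      by_contra hxs
      refine hx (Finset.sum_eq_zero fun i _ => ?_)
      have hsub := (tsupport_fderiv_apply_subset ℝ (f := fun y =>
        fderiv ℝ u y (EuclideanSpace.single i 1)) (EuclideanSpace.single i 1)).trans
        (tsupport_fderiv_apply_subset ℝ (f := u) (EuclideanSpace.single i 1))
      exact image_eq_zero_of_notMem_tsupport (f := fun z => fderiv ℝ (fun y =>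
        fderiv ℝ u y (EuclideanSpace.single i 1)) z (EuclideanSpace.single i 1))
        fun h => hxs (hsub h)
    refine h0.mono fun x hx hx0 => hx ?_
    simp [hx0]
  have hint : ∫ x, ((n : ℝ) ^ 2 * ((n : ℝ) - 4) ^ 2 / 16) * (‖u x‖ ^ 2 / ‖x‖ ^ 4)
      - 2 * ((n : ℝ) * (n - 4) / 4) * ∑ i, fderiv ℝ (rellichField (((n : ℝ) - 2) / 2) u i) x
        (EuclideanSpace.single i 1) =
      ((n : ℝ) ^ 2 * ((n : ℝ) - 4) ^ 2 / 16) * ∫ x, ‖u x‖ ^ 2 / ‖x‖ ^ 4 := by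
    rw [integral_sub (hU.const_mul _) (hsum.const_mul _), integral_const_mul, integral_const_mul,
      integral_finsetSum _ fun i _ => (hF i).1, Finset.sum_eq_zero fun i _ => (hF i).2]
    ring
  rw [← hint]
  -- the origin is a null set since the dimension is positive
  have : Nonempty (Fin n) := ⟨⟨0, by omega⟩⟩
  refine integral_mono_ae ((hU.const_mul _).sub (hsum.const_mul _)) hlap ?_
  filter_upwards [compl_mem_ae_iff.mpr (measure_singleton (0 : EuclideanSpace ℝ (Fin n)))]
    with x hx
  exact rellich_pointwise hn hu hsupp hx
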